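/- Let (S,d) be a geodesic δ-hyperbolic metric space with basepoint e, and let {p_n}, {q_n}, {r_n}, {s_n} be sequences in S tending to four pairwise distinct points p,q,r,s of the Gromov boundary ∂S. For each n fix geodesic segments [p_n,q_n] and [r_n,s_n], and choose points a_n ∈ [p_n,q_n] and b_n ∈ [r_n,s_n] with d(e,a_n) = d(e,[p_n,q_n]) and d(e,b_n) = d(e,[r_n,s_n]). Then there exists N such that for all m,n ≥ N and every choice of geodesic segments [a_m,b_m] and [a_n,b_n], the segment [a_m,b_m] is contained in the 92δ-neighborhood of [a_n,b_n]. -/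

import Mathlib

/-!
All Gromov products are based at `e`. Slimness of triangles gives
`(x·y) ≤ d(e,[x,y]) ≤ (x·y) + 2δ` (`gprod_le_dist`, `exists_dist_le_gprod`), whence the four-point
inequality `(x·z) ≥ min (x·y) (y·z) - 3δ` (`four_point`).

Put `g n = (p_n·q_n)`. As `p ≠ q`, the sequence `g` does not tend to infinity, while `(p_m·p_n)` and
`(q_m·q_n)` do; the four-point inequality, applied twice, shows that `g` is eventually bounded and
then that `|g m - g n| ≤ 6δ` for large `m, n`. The point `a_n` of `[p_n,q_n]` nearest to `e` satisfies
`d(e,a_n) ≤ g n + 2δ` and `(a_n·p_n) ≥ g n`, so comparing along `a_m, p_m, p_n, a_n` bounds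
`(a_m·a_n)` from below and yields `d(a_m,a_n) ≤ 22δ` (`nearest_points_close`).
The same holds for `b`. A geodesic quadrilateral is `2δ`-slim, so `[a_m,b_m]` lies in the
`24δ`-neighborhood of `[a_n,b_n]`.
-/

/-- A geodesic segment from `u` to `v`: the image of an isometric embedding of
`[0, dist u v]` sending the endpoints to `u` and `v`. -/
def IsGeodesicSegment {S : Type*} [MetricSpace S] (Γ : Set S) (u v : S) : Prop :=
  ∃ γ : ℝ → S, γ 0 = u ∧ γ (dist u v) = v ∧
    (∀ s ∈ Set.Icc (0 : ℝ) (dist u v), ∀ t ∈ Set.Icc (0 : ℝ) (dist u v),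
      dist (γ s) (γ t) = |s - t|) ∧
    Γ = γ '' Set.Icc (0 : ℝ) (dist u v)

/-- A geodesic metric space: every pair of points is joined by a geodesic segment. -/
def GeodesicSpace (S : Type*) [MetricSpace S] : Prop :=
  ∀ u v : S, ∃ Γ : Set S, IsGeodesicSegment Γ u v

/-- `δ`-hyperbolicity: every geodesic triangle is `δ`-slim. -/
def DeltaHyperbolic (S : Type*) [MetricSpace S] (δ : ℝ) : Prop :=
  ∀ x y z : S, ∀ Γ₁ Γ₂ Γ₃ : Set S,
    IsGeodesicSegment Γ₁ x y → IsGeodesicSegment Γ₂ y z → IsGeodesicSegment Γ₃ z x →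
    ∀ p ∈ Γ₁, Metric.infDist p (Γ₂ ∪ Γ₃) ≤ δ

/-- The Gromov product of `x` and `y` with respect to the basepoint `e`. -/
noncomputable def gprod {S : Type*} [MetricSpace S] (e x y : S) : ℝ :=
  (dist x e + dist y e - dist x y) / 2

/-- A sequence converges to infinity if its pairwise Gromov products tend to infinity. -/
def ConvToInfty {S : Type*} [MetricSpace S] (e : S) (s : ℕ → S) : Prop :=
  Filter.Tendsto (fun p : ℕ × ℕ => gprod e (s p.1) (s p.2)) Filter.atTop Filter.atTop

/-- The type of sequences in `S` converging to infinity. -/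
def BSeq (S : Type*) [MetricSpace S] (e : S) := {s : ℕ → S // ConvToInfty e s}

/-- Two sequences converging to infinity are equivalent if their mutual Gromov
products tend to infinity. -/
def bequiv {S : Type*} [MetricSpace S] (e : S) (s t : BSeq S e) : Prop :=
  Filter.Tendsto (fun n => gprod e (s.1 n) (t.1 n)) Filter.atTop Filter.atTop

/-- The Gromov boundary of `S` with respect to the basepoint `e`. -/
def GBoundary (S : Type*) [MetricSpace S] (e : S) := Quot (bequiv (S := S) e)

/-- A sequence in `S` tends to the boundary point `x`. -/
def TendstoBd {S : Type*} [MetricSpace S] (e : S) (s : ℕ → S) (x : GBoundary S e) : Prop :=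
  ∃ h : ConvToInfty e s, Quot.mk _ (⟨s, h⟩ : BSeq S e) = x

section Helpers

variable {S : Type*} [MetricSpace S]

/-! ### Geodesic segments -/

lemma IsGeodesicSegment.symm {Γ : Set S} {u v : S} (h : IsGeodesicSegment Γ u v) :
    IsGeodesicSegment Γ v u := by
  obtain ⟨γ, h0, h1, h2, rfl⟩ := h
  refine ⟨fun t => γ (dist u v - t), ?_, ?_, ?_, ?_⟩
  · simpa using h1
  · simpa [dist_comm v u] using h0
  · intro s hs t ht
    rw [dist_comm v u] at hs ht
    rw [h2 _ ⟨by linarith [hs.2], by linarith [hs.1]⟩ _ ⟨by linarith [ht.2], by linarith [ht.1]⟩,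
      abs_sub_comm]
    congr 1
    ring
  · rw [dist_comm v u]
    ext z
    constructor
    · rintro ⟨t, ht, rfl⟩
      exact ⟨dist u v - t, ⟨by linarith [ht.2], by linarith [ht.1]⟩, by simp⟩
    · rintro ⟨t, ht, rfl⟩
      exact ⟨dist u v - t, ⟨by linarith [ht.2], by linarith [ht.1]⟩, rfl⟩

lemma IsGeodesicSegment.left_mem {Γ : Set S} {u v : S} (h : IsGeodesicSegment Γ u v) :
    u ∈ Γ := by
  obtain ⟨γ, h0, h1, h2, rfl⟩ := h
  exact ⟨0, ⟨le_rfl, dist_nonneg⟩, h0⟩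

lemma IsGeodesicSegment.right_mem {Γ : Set S} {u v : S} (h : IsGeodesicSegment Γ u v) :
    v ∈ Γ := h.symm.left_mem

lemma IsGeodesicSegment.dist_add {Γ : Set S} {u v z : S} (h : IsGeodesicSegment Γ u v)
    (hz : z ∈ Γ) : dist u z + dist z v = dist u v := by
  obtain ⟨γ, h0, h1, h2, rfl⟩ := h
  obtain ⟨t, ht, rfl⟩ := hz
  have e1 := h2 0 ⟨le_rfl, dist_nonneg⟩ t ht
  have e2 := h2 t ht (dist u v) ⟨dist_nonneg, le_rfl⟩
  rw [h0, abs_sub_comm, abs_of_nonneg (by linarith [ht.1])] at e1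
  rw [h1, abs_sub_comm, abs_of_nonneg (by linarith [ht.2])] at e2
  rw [e1, e2]
  ring

lemma geodesic_continuousOn {γ : ℝ → S} {l : ℝ}
    (h : ∀ s ∈ Set.Icc (0 : ℝ) l, ∀ t ∈ Set.Icc (0 : ℝ) l, dist (γ s) (γ t) = |s - t|) :
    ContinuousOn γ (Set.Icc 0 l) := by
  refine (LipschitzOnWith.of_dist_le_mul (K := 1) fun s hs t ht => ?_).continuousOn
  rw [h s hs t ht, Real.dist_eq]
  simp

lemma IsGeodesicSegment.isCompact {Γ : Set S} {u v : S} (h : IsGeodesicSegment Γ u v) :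
    IsCompact Γ := by
  obtain ⟨γ, h0, h1, h2, rfl⟩ := h
  exact isCompact_Icc.image_of_continuousOn (geodesic_continuousOn h2)

lemma IsGeodesicSegment.isPreconnected {Γ : Set S} {u v : S} (h : IsGeodesicSegment Γ u v) :
    IsPreconnected Γ := by
  obtain ⟨γ, h0, h1, h2, rfl⟩ := h
  exact isPreconnected_Icc.image _ (geodesic_continuousOn h2)

/-- By compactness, slimness provides an actual nearby point on one of the other two sides. -/
lemma DeltaHyperbolic.exists_near {δ : ℝ} (hhyp : DeltaHyperbolic S δ) {x y z w : S}
    {A B C : Set S} (hA : IsGeodesicSegment A x y) (hB : IsGeodesicSegment B y z)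
    (hC : IsGeodesicSegment C z x) (hw : w ∈ A) :
    (∃ u ∈ B, dist w u ≤ δ) ∨ (∃ u ∈ C, dist w u ≤ δ) := by
  have h := hhyp x y z A B C hA hB hC w hw
  obtain ⟨u, hu, hd⟩ := (hB.isCompact.union hC.isCompact).exists_infDist_eq_dist
    ⟨y, Or.inl hB.left_mem⟩ w
  rw [hd] at h
  rcases hu with hu | hu
  · exact Or.inl ⟨u, hu, h⟩
  · exact Or.inr ⟨u, hu, h⟩

/-! ### Gromov products and the four-point inequality -/

lemma gprod_comm (e x y : S) : gprod e x y = gprod e y x := by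
  unfold gprod
  rw [dist_comm x y]
  ring

lemma gprod_le_dist (e : S) {x y w : S} {Γ : Set S} (h : IsGeodesicSegment Γ x y)
    (hw : w ∈ Γ) : gprod e x y ≤ dist e w := by
  unfold gprod
  have := h.dist_add hw
  have h1 := dist_triangle x w e
  have h2 := dist_triangle y w e
  rw [dist_comm y w] at h2
  rw [dist_comm e w]
  linarith

/-- By connectedness some point of `[x,y]` is `δ`-close to both other sides of the triangle
`e, x, y`; that point is the witness. -/
lemma exists_dist_le_gprod {δ : ℝ} (hδ : 0 ≤ δ) (hgeo : GeodesicSpace S)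
    (hhyp : DeltaHyperbolic S δ) (e : S) {x y : S} {Γ : Set S} (h : IsGeodesicSegment Γ x y) :
    ∃ w ∈ Γ, dist e w ≤ gprod e x y + 2 * δ := by
  obtain ⟨A, hA⟩ := hgeo y e
  obtain ⟨B, hB⟩ := hgeo e x
  have hne := (isPreconnected_closed_iff.1 h.isPreconnected)
    {w | Metric.infDist w A ≤ δ} {w | Metric.infDist w B ≤ δ}
    (isClosed_le (Metric.continuous_infDist_pt A) continuous_const)
    (isClosed_le (Metric.continuous_infDist_pt B) continuous_const)
    (by
      intro w hw
      rcases hhyp.exists_near h hA hB hw with ⟨u, hu, hd⟩ | ⟨u, hu, hd⟩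
      · exact Or.inl ((Metric.infDist_le_dist_of_mem hu).trans hd)
      · exact Or.inr ((Metric.infDist_le_dist_of_mem hu).trans hd))
    ⟨y, h.right_mem, by
      simpa [Metric.infDist_zero_of_mem hA.left_mem] using hδ⟩
    ⟨x, h.left_mem, by
      simpa [Metric.infDist_zero_of_mem hB.right_mem] using hδ⟩
  obtain ⟨w, hw, hwA, hwB⟩ := hne
  obtain ⟨u, hu, hud⟩ := hA.isCompact.exists_infDist_eq_dist ⟨y, hA.left_mem⟩ w
  obtain ⟨v, hv, hvd⟩ := hB.isCompact.exists_infDist_eq_dist ⟨e, hB.left_mem⟩ w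
  have hwu : dist w u ≤ δ := hud ▸ hwA
  have hwv : dist w v ≤ δ := hvd ▸ hwB
  refine ⟨w, hw, ?_⟩
  have e1 := h.dist_add hw
  have e2 := hA.dist_add hu
  have e3 := hB.dist_add hv
  have t1 := dist_triangle w u e
  have t2 := dist_triangle y u w
  have t3 := dist_triangle e v w
  have t4 := dist_triangle w v x
  unfold gprod
  rw [dist_comm u w] at t2
  rw [dist_comm v w] at t3
  rw [dist_comm w e] at t1
  rw [dist_comm w x] at t4
  rw [dist_comm w y] at e1
  rw [dist_comm x e]
  linarith

lemma four_point {δ : ℝ} (hδ : 0 ≤ δ) (hgeo : GeodesicSpace S)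
    (hhyp : DeltaHyperbolic S δ) (e x y z : S) :
    min (gprod e x y) (gprod e y z) - 3 * δ ≤ gprod e x z := by
  obtain ⟨A, hA⟩ := hgeo x z
  obtain ⟨B, hB⟩ := hgeo z y
  obtain ⟨C, hC⟩ := hgeo y x
  obtain ⟨w, hw, hd⟩ := exists_dist_le_gprod hδ hgeo hhyp e hA
  rcases hhyp.exists_near hA hB hC hw with ⟨u, hu, hud⟩ | ⟨u, hu, hud⟩
  · have h1 := gprod_le_dist e hB hu
    rw [gprod_comm] at h1
    have := dist_triangle e w u
    linarith [min_le_right (gprod e x y) (gprod e y z)]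
  · have h1 := gprod_le_dist e hC hu
    rw [gprod_comm] at h1
    have := dist_triangle e w u
    linarith [min_le_left (gprod e x y) (gprod e y z)]

lemma five_point {δ : ℝ} (hδ : 0 ≤ δ) (hgeo : GeodesicSpace S)
    (hhyp : DeltaHyperbolic S δ) (e x y z w : S) {c : ℝ} (h1 : c ≤ gprod e x y)
    (h2 : c ≤ gprod e y z) (h3 : c ≤ gprod e z w) : c - 6 * δ ≤ gprod e x w := by
  have f1 := four_point hδ hgeo hhyp e x y z
  have f2 := four_point hδ hgeo hhyp e x z w
  have m1 := le_min h1 h2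
  have m2 : c - 3 * δ ≤ min (gprod e x z) (gprod e z w) := le_min (by linarith) (by linarith)
  linarith

/-! ### Points nearest to the basepoint -/

/-- The point `a` of `[x,y]` nearest to `e` is at distance at most `(x·y) + 2δ` from `e`, and
lies in the direction of `x` as seen from `e`. -/
lemma nearest_point {δ : ℝ} (hδ : 0 ≤ δ) (hgeo : GeodesicSpace S)
    (hhyp : DeltaHyperbolic S δ) (e : S) {x y a : S} {Γ : Set S} (h : IsGeodesicSegment Γ x y)
    (ha : a ∈ Γ) (hd : dist e a = Metric.infDist e Γ) :
    dist e a ≤ gprod e x y + 2 * δ ∧ gprod e x y ≤ gprod e x a := by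
  obtain ⟨w, hw, hwd⟩ := exists_dist_le_gprod hδ hgeo hhyp e h
  refine ⟨by linarith [Metric.infDist_le_dist_of_mem (x := e) hw], ?_⟩
  have e1 := h.dist_add ha
  have t := dist_triangle y a e
  rw [dist_comm y a] at t
  unfold gprod
  linarith

lemma exists_gprod_ge {e : S} {x : ℕ → S} (h : ConvToInfty e x) (C : ℝ) :
    ∃ N, ∀ m n, N ≤ m → N ≤ n → C ≤ gprod e (x m) (x n) := by
  have := Filter.eventually_atTop.1 (Filter.tendsto_atTop.1 h C)
  obtain ⟨⟨a, b⟩, hab⟩ := this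
  exact ⟨max a b, fun m n hm hn => hab (m, n)
    ⟨(le_max_left _ _).trans hm, (le_max_right _ _).trans hn⟩⟩

lemma nearest_points_close {δ : ℝ} (hδ : 0 ≤ δ) (hgeo : GeodesicSpace S)
    (hhyp : DeltaHyperbolic S δ) {e : S} {x y : ℕ → S} {p q : GBoundary S e}
    (hp : TendstoBd e x p) (hq : TendstoBd e y q) (hpq : p ≠ q) {Γ : ℕ → Set S}
    (hΓ : ∀ n, IsGeodesicSegment (Γ n) (x n) (y n)) {a : ℕ → S}
    (ha : ∀ n, a n ∈ Γ n ∧ dist e (a n) = Metric.infDist e (Γ n)) :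
    ∃ N, ∀ m n, N ≤ m → N ≤ n → dist (a m) (a n) ≤ 22 * δ := by
  obtain ⟨hx, rfl⟩ := hp
  obtain ⟨hy, rfl⟩ := hq
  have hnt : ¬ Filter.Tendsto (fun n => gprod e (x n) (y n)) Filter.atTop Filter.atTop :=
    fun ht => hpq (Quot.sound ht)
  -- `M` bounds `(x_n·y_n)` along a subsequence, hence `M + 6δ` bounds it eventually.
  obtain ⟨M, hM⟩ : ∃ M : ℝ, ∀ N : ℕ, ∃ n ≥ N, gprod e (x n) (y n) < M := by
    rw [Filter.tendsto_atTop] at hnt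
    push Not at hnt
    obtain ⟨M, hM⟩ := hnt
    exact ⟨M, fun N => by simpa using Filter.frequently_atTop.1 hM N⟩
  obtain ⟨N₁, h₁⟩ := exists_gprod_ge hx (M + 6 * δ)
  obtain ⟨N₂, h₂⟩ := exists_gprod_ge hy (M + 6 * δ)
  have hbd : ∀ n, max N₁ N₂ ≤ n → gprod e (x n) (y n) ≤ M + 6 * δ := by
    intro n hn
    obtain ⟨k, hk, hkM⟩ := hM (max N₁ N₂)
    by_contra! hlt
    have := five_point hδ hgeo hhyp e (x k) (x n) (y n) (y k)
      (h₁ k n ((le_max_left _ _).trans hk) ((le_max_left _ _).trans hn)) hlt.le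
      (h₂ n k ((le_max_right _ _).trans hn) ((le_max_right _ _).trans hk))
    linarith
  have hcmp : ∀ m n, max N₁ N₂ ≤ m → max N₁ N₂ ≤ n →
      gprod e (x n) (y n) - 6 * δ ≤ gprod e (x m) (y m) := by
    intro m n hm hn
    exact five_point hδ hgeo hhyp e (x m) (x n) (y n) (y m)
      ((hbd n hn).trans (h₁ m n ((le_max_left _ _).trans hm) ((le_max_left _ _).trans hn))) le_rfl
      ((hbd n hn).trans (h₂ n m ((le_max_right _ _).trans hn) ((le_max_right _ _).trans hm)))
  refine ⟨max N₁ N₂, fun m n hm hn => ?_⟩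
  wlog hle : gprod e (x m) (y m) ≤ gprod e (x n) (y n) generalizing m n
  · rw [dist_comm]
    exact this n m hn hm (not_le.1 hle).le
  obtain ⟨am, am'⟩ := nearest_point hδ hgeo hhyp e (hΓ m) (ha m).1 (ha m).2
  obtain ⟨an, an'⟩ := nearest_point hδ hgeo hhyp e (hΓ n) (ha n).1 (ha n).2
  have key := five_point hδ hgeo hhyp e (a m) (x m) (x n) (a n)
    (by rwa [gprod_comm e (a m)])
    ((hbd m hm).trans (h₁ m n ((le_max_left _ _).trans hm) ((le_max_left _ _).trans hn)))
    (hle.trans an')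
  have hc := hcmp m n hm hn
  have hk : gprod e (a m) (a n) = (dist e (a m) + dist e (a n) - dist (a m) (a n)) / 2 := by
    unfold gprod
    rw [dist_comm (a m) e, dist_comm (a n) e]
  linarith

/-! ### Quadrilaterals -/

/-- Slimness of a geodesic quadrilateral two of whose opposite sides have length at most `D`. -/
lemma near_of_endpoints_close {δ D : ℝ} (hgeo : GeodesicSpace S)
    (hhyp : DeltaHyperbolic S δ) {a b a' b' : S} (ha : dist a a' ≤ D) (hb : dist b b' ≤ D)
    (hD : 0 ≤ D) (hδ : 0 ≤ δ) {E F : Set S} (hE : IsGeodesicSegment E a b)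
    (hF : IsGeodesicSegment F a' b') {z : S} (hz : z ∈ E) :
    Metric.infDist z F ≤ D + 2 * δ := by
  obtain ⟨A, hA⟩ := hgeo a' a
  obtain ⟨B, hB⟩ := hgeo b b'
  obtain ⟨C, hC⟩ := hgeo b a'
  suffices h : ∃ w ∈ F, dist z w ≤ D + 2 * δ by
    obtain ⟨w, hw, hd⟩ := h
    exact (Metric.infDist_le_dist_of_mem hw).trans hd
  rcases hhyp.exists_near hE hC hA hz with ⟨u, hu, hd⟩ | ⟨u, hu, hd⟩
  · rcases hhyp.exists_near hC hF hB.symm hu with ⟨v, hv, hd'⟩ | ⟨v, hv, hd'⟩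
    · exact ⟨v, hv, by linarith [dist_triangle z u v]⟩
    · refine ⟨b', hF.right_mem, ?_⟩
      have := hB.dist_add hv
      linarith [dist_triangle z u b', dist_triangle u v b', dist_nonneg (x := b) (y := v)]
  · refine ⟨a', hF.left_mem, ?_⟩
    have := hA.dist_add hu
    rw [dist_comm a' a, dist_comm a' u] at this
    linarith [dist_triangle z u a', dist_nonneg (x := u) (y := a)]

end Helpers

/-- Let sequences `p_n, q_n, r_n, s_n` tend to four pairwise distinct
boundary points, let `a_n ∈ [p_n,q_n]` and `b_n ∈ [r_n,s_n]` realize the distance to the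
basepoint. Then for large `m, n`, every geodesic `[a_m,b_m]` lies in the
`92δ`-neighborhood of every geodesic `[a_n,b_n]`. -/
theorem statement15 {S : Type*} [MetricSpace S] (δ : ℝ) (hδ : 0 ≤ δ)
    (hgeo : GeodesicSpace S) (hhyp : DeltaHyperbolic S δ) (e : S)
    (pn qn rn sn : ℕ → S) (p q r s : GBoundary S e)
    (hp : TendstoBd e pn p) (hq : TendstoBd e qn q)
    (hr : TendstoBd e rn r) (hs : TendstoBd e sn s)
    (hpq : p ≠ q) (hpr : p ≠ r) (hps : p ≠ s) (hqr : q ≠ r) (hqs : q ≠ s) (hrs : r ≠ s)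
    (Γ Δ : ℕ → Set S)
    (hΓ : ∀ n, IsGeodesicSegment (Γ n) (pn n) (qn n))
    (hΔ : ∀ n, IsGeodesicSegment (Δ n) (rn n) (sn n))
    (a b : ℕ → S)
    (ha : ∀ n, a n ∈ Γ n ∧ dist e (a n) = Metric.infDist e (Γ n))
    (hb : ∀ n, b n ∈ Δ n ∧ dist e (b n) = Metric.infDist e (Δ n)) :
    ∃ N : ℕ, ∀ m n : ℕ, N ≤ m → N ≤ n → ∀ E F : Set S,
      IsGeodesicSegment E (a m) (b m) → IsGeodesicSegment F (a n) (b n) →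
      ∀ z ∈ E, Metric.infDist z F ≤ 92 * δ := by
  obtain ⟨N₁, h₁⟩ := nearest_points_close hδ hgeo hhyp hp hq hpq hΓ ha
  obtain ⟨N₂, h₂⟩ := nearest_points_close hδ hgeo hhyp hr hs hrs hΔ hb
  refine ⟨max N₁ N₂, fun m n hm hn E F hE hF z hz => ?_⟩
  have := near_of_endpoints_close hgeo hhyp
    (h₁ m n ((le_max_left _ _).trans hm) ((le_max_left _ _).trans hn))
    (h₂ m n ((le_max_right _ _).trans hm) ((le_max_right _ _).trans hn))
    (by positivity) hδ hE hF hz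
  linarith
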